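/- Descartes's rule of signs (positive part): for every nonzero real polynomial P, the number of positive real roots of P, counted with multiplicity, is at most the number of sign changes in the sequence of its nonzero coefficients, i.e. z⁺(P) ≤ v(P). -/

import Mathlib

open Polynomial

/-- Number of sign changes in a list of reals, after discarding zero entries:
the number of consecutive pairs with negative product. -/
noncomputable def signChanges (l : List ℝ) : ℕ :=
  let l' := l.filter (fun x => decide (x ≠ 0))
  (l'.zip l'.tail).countP (fun p => decide (p.1 * p.2 < 0))

/-- `v(P)`: number of sign changes in the sequence of nonzero coefficients of `P`,
listed in order of increasing degree. -/
noncomputable def v (P : Polynomial ℝ) : ℕ :=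
  signChanges (List.ofFn fun i : Fin (P.natDegree + 1) => P.coeff i)

/-- `c(P) := v(P(-X))`: the number of sign permanences of `P` (minimization convention). -/
noncomputable def c (P : Polynomial ℝ) : ℕ :=
  v (P.comp (-Polynomial.X))

/-- `z⁺(P)`: number of positive real roots of `P`, with multiplicity. -/
noncomputable def zpos (P : Polynomial ℝ) : ℕ :=
  (P.roots.filter (fun x => 0 < x)).card

/-- `z⁻(P)`: number of negative real roots of `P`, with multiplicity. -/
noncomputable def zneg (P : Polynomial ℝ) : ℕ :=
  (P.roots.filter (fun x => x < 0)).card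

/-!
Mathlib's form of the rule bounds the number of positive roots by `Polynomial.signVariations`, the
length, minus one, of the list of nonzero coefficient signs in decreasing degree after merging equal
neighbours. Each merged block but the first begins exactly where two consecutive signs differ, that
is, where two consecutive nonzero coefficients have negative product, and the number of such places
does not depend on the direction in which the list is read.
-/

section ConsecutivePairs

open List

variable {α β : Type*}

lemma consecutivePairs_cons_cons (a b : α) (l : List α) :
    (a :: b :: l).consecutivePairs = (a, b) :: (b :: l).consecutivePairs :=
  rfl

lemma consecutivePairs_map (f : α → β) (l : List α) :
    (l.map f).consecutivePairs = l.consecutivePairs.map (Prod.map f f) := by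
  rw [consecutivePairs, ← map_tail, zip_map]

lemma consecutivePairs_reverse (l : List α) :
    l.reverse.consecutivePairs = (l.consecutivePairs.map Prod.swap).reverse := by
  apply ext_getElem <;> grind

lemma length_destutter'_eq_countP_consecutivePairs (R : α → α → Prop) [DecidableRel R]
    [IsEquiv α Rᶜ] (a : α) (l : List α) :
    (l.destutter' R a).length = (a :: l).consecutivePairs.countP (fun p => R p.1 p.2) + 1 := by
  induction l generalizing a with
  | nil => rfl
  | cons b l ih =>
    rw [consecutivePairs_cons_cons, countP_cons]
    by_cases hab : R a b
    · rw [destutter'_cons_pos _ hab, length_cons, ih b, if_pos (decide_eq_true hab)]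
    · rw [destutter'_cons_neg _ hab, length_destutter'_congr _ hab, ih b,
        if_neg (by simpa using hab), add_zero]

lemma length_destutter_sub_one_eq_countP_consecutivePairs (R : α → α → Prop) [DecidableRel R]
    [IsEquiv α Rᶜ] (l : List α) :
    (l.destutter R).length - 1 = l.consecutivePairs.countP (fun p => R p.1 p.2) := by
  cases l with
  | nil => rfl
  | cons a l =>
    rw [destutter_cons', length_destutter'_eq_countP_consecutivePairs, Nat.add_sub_cancel]

end ConsecutivePairs

lemma mul_neg_iff_sign_ne_sign {R : Type*} [Ring R] [LinearOrder R] [IsStrictOrderedRing R]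
    {a b : R} (ha : a ≠ 0) (hb : b ≠ 0) :
    a * b < 0 ↔ SignType.sign a ≠ SignType.sign b := by
  have signs : ∀ s t : SignType, s ≠ 0 → t ≠ 0 → (s * t = -1 ↔ s ≠ t) := by decide
  rw [← sign_eq_neg_one_iff, sign_mul]
  exact signs _ _ (sign_ne_zero.2 ha) (sign_ne_zero.2 hb)

lemma signChanges_reverse (l : List ℝ) : signChanges l.reverse = signChanges l := by
  simp only [signChanges, List.filter_reverse, consecutivePairs_reverse, List.countP_reverse,
    List.countP_map, Function.comp_def, Prod.fst_swap, Prod.snd_swap, mul_comm]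

lemma signChanges_eq_length_destutter_sub_one (l : List ℝ) :
    signChanges l =
      (((l.map SignType.sign).filter (· ≠ 0)).destutter (· ≠ ·)).length - 1 := by
  have filter_sign : (l.map SignType.sign).filter (· ≠ 0) =
      (l.filter (· ≠ 0)).map SignType.sign := by
    simp only [List.filter_map, Function.comp_def, ne_eq, sign_eq_zero_iff]
  rw [filter_sign, length_destutter_sub_one_eq_countP_consecutivePairs,
    consecutivePairs_map, List.countP_map]
  refine List.countP_congr fun p hp => ?_
  have ne_zero_of_mem {x : ℝ} (hx : x ∈ l.filter (· ≠ 0)) : x ≠ 0 := by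
    simpa using List.of_mem_filter hx
  obtain ⟨hfst, hsnd⟩ := List.of_mem_zip hp
  simpa using mul_neg_iff_sign_ne_sign (ne_zero_of_mem hfst)
    (ne_zero_of_mem (List.mem_of_mem_tail hsnd))

lemma coeffList_eq_reverse_ofFn {R : Type*} [Semiring R] {P : R[X]} (hP : P ≠ 0) :
    P.coeffList = (List.ofFn fun i : Fin (P.natDegree + 1) => P.coeff i).reverse := by
  rw [coeffList, withBotSucc_degree_eq_natDegree_add_one hP, List.map_reverse,
    ← List.map_coe_finRange_eq_range, List.map_map, List.ofFn_eq_map]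
  rfl

lemma v_eq_signVariations {P : ℝ[X]} (hP : P ≠ 0) : v P = P.signVariations := by
  rw [v, ← signChanges_reverse, ← coeffList_eq_reverse_ofFn hP,
    signChanges_eq_length_destutter_sub_one, signVariations]

/-- Descartes's rule of signs (positive part): `z⁺(P) ≤ v(P)`. -/
theorem descartes_rule_of_signs_pos (P : Polynomial ℝ) (hP : P ≠ 0) :
    zpos P ≤ v P := by
  rw [zpos, ← Multiset.countP_eq_card_filter, v_eq_signVariations hP]
  exact roots_countP_pos_le_signVariations P
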